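/- Suppose q ≠ 2, or q = 2 and T(T+1) ∤ M. Then: (1) the A-action defined by f · ψ_λ = Σ_i σ_{f_i} · ψ_λ, where f ≡ Σ_i f_i (mod M) with each gcd(f_i, M) = 1 and σ_{f_i} · ψ_λ is the conjugation action, is well-defined (independent of the decomposition) and gives an A-module structure on H_{M,z}, and consequently on H_{M,Γ}; (2) the image H_M of H_{M,z} in Λ_M is an A-submodule of Λ_M, the embedding H_{M,z} → H_M is an A-module isomorphism, and H_{M,z} and H_{M,Γ} are A-modules of exponent M (annihilated by M). -/

import Mathlib

open Polynomial IntermediateField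

set_option synthInstance.maxHeartbeats 1000000
set_option maxHeartbeats 1000000

/-- `ψ` is the Carlitz module: the ring homomorphism `A = 𝔽_q[T] → End_{𝔽_q}(k̄, +)`
determined by `T ↦ (α ↦ Tα + α^q)` and `c ↦ (α ↦ cα)` for constants `c ∈ 𝔽_q`,
where `k̄` is the algebraic closure of `k = 𝔽_q(T)`. -/
def IsCarlitz {Fq : Type} [Field Fq] [Fintype Fq]
    (ψ : Polynomial Fq →+* AddMonoid.End (AlgebraicClosure (RatFunc Fq))) : Prop :=
  (∀ α, ψ X α = algebraMap (RatFunc Fq) (AlgebraicClosure (RatFunc Fq)) RatFunc.X * α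
      + α ^ Fintype.card Fq) ∧
  (∀ (c : Fq) (α), ψ (C c) α
      = algebraMap (RatFunc Fq) (AlgebraicClosure (RatFunc Fq)) (RatFunc.C c) * α)

/-- An automorphism `τ` of an intermediate field `E` of `k̄/k` fixes the `M`-torsion
points `Λ_M` pointwise; when `E ⊇ K = k(Λ_M)`, this says exactly `τ ∈ Gal(E/K)`. -/
def FixesTorsion {Fq : Type} [Field Fq] [Fintype Fq]
    (ψ : Polynomial Fq →+* AddMonoid.End (AlgebraicClosure (RatFunc Fq)))
    (M : Polynomial Fq)
    {E : IntermediateField (RatFunc Fq) (AlgebraicClosure (RatFunc Fq))}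
    (τ : ↥E ≃ₐ[RatFunc Fq] ↥E) : Prop :=
  ∀ x : ↥E, ψ M (x : AlgebraicClosure (RatFunc Fq)) = 0 → τ x = x

/-- An automorphism `s ∈ Gal(E/k)` is an extension of `σ_B ∈ Gal(K/k)`, i.e. it acts on
the `M`-torsion points `Λ_M ⊆ E` by `λ ↦ λ^B`. -/
def ExtendsSigma {Fq : Type} [Field Fq] [Fintype Fq]
    (ψ : Polynomial Fq →+* AddMonoid.End (AlgebraicClosure (RatFunc Fq)))
    (M : Polynomial Fq)
    {E : IntermediateField (RatFunc Fq) (AlgebraicClosure (RatFunc Fq))}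
    (s : ↥E ≃ₐ[RatFunc Fq] ↥E) (B : Polynomial Fq) : Prop :=
  ∀ x : ↥E, ψ M (x : AlgebraicClosure (RatFunc Fq)) = 0 →
    ((s x : AlgebraicClosure (RatFunc Fq))) = ψ B (x : AlgebraicClosure (RatFunc Fq))

/-- `c` is the `A`-action on `Gal(E/K)` defined via decompositions: for `f ∈ A` and
`τ ∈ Gal(E/K)`, whenever `f ≡ f_1 + ⋯ + f_n (mod M)` with all `gcd(f_i, M) = 1`, and
`s_i ∈ Gal(E/k)` is any extension of `σ_{f_i} ∈ Gal(K/k)`, one has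
`c f τ = Σ_i σ_{f_i} · τ`, where `σ_{f_i} · τ = s_i ∘ τ ∘ s_i⁻¹` is the conjugation
action (the sum being composition in the abelian group `Gal(E/K)`). -/
def IsDecompConjAction {Fq : Type} [Field Fq] [Fintype Fq]
    (ψ : Polynomial Fq →+* AddMonoid.End (AlgebraicClosure (RatFunc Fq)))
    (M : Polynomial Fq)
    {E : IntermediateField (RatFunc Fq) (AlgebraicClosure (RatFunc Fq))}
    (c : Polynomial Fq → (↥E ≃ₐ[RatFunc Fq] ↥E) → (↥E ≃ₐ[RatFunc Fq] ↥E)) : Prop :=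
  ∀ (f : Polynomial Fq) (τ : ↥E ≃ₐ[RatFunc Fq] ↥E), FixesTorsion ψ M τ →
    ∀ (n : ℕ) (g : Fin n → Polynomial Fq), (∀ i, IsCoprime (g i) M) →
      M ∣ (f - ∑ i, g i) →
      ∀ s : Fin n → (↥E ≃ₐ[RatFunc Fq] ↥E), (∀ i, ExtendsSigma ψ M (s i) (g i)) →
        c f τ = (List.ofFn (fun i => s i * τ * (s i)⁻¹)).prod

/-!
Modulo a prime `P`, the action `x ↦ x ^ P` is `x ↦ x ^ (q ^ deg P)`, so a Frobenius element at
`P ∤ M` acts on the `M`-torsion as `λ ↦ λ ^ P`; as every `B` prime to `M` is congruent to a monic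
polynomial, every `σ_B` exists. Outside the exceptional case, the Chinese remainder theorem writes
every `f` as a sum of polynomials prime to `M`. Under the Kummer embedding `τ ↦ τ α - α`,
conjugation by an extension of `σ_B` becomes `λ ↦ λ ^ B` and composition becomes addition, so
`f · τ` is the unique automorphism `ρ` with `ρ α - α = (τ α - α) ^ f` for all Kummer generators `α`,
whatever the decomposition of `f`.
-/

theorem add_pow_card_of_ringHom {Fq R : Type*} [Field Fq] [Fintype Fq] [CommRing R]
    (i : Fq →+* R) (x y : R) :
    (x + y) ^ Fintype.card Fq = x ^ Fintype.card Fq + y ^ Fintype.card Fq := by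
  let := i.toAlgebra
  exact map_add (FiniteField.frobeniusAlgHom Fq R) x y

section CarlitzAction

variable (Fq : Type*) [Field Fq] [Fintype Fq]
variable (R : Type*) [CommRing R] [Algebra Fq[X] R]

/-- The additive operator `x ↦ T x + x ^ q` by which `T` acts in the Carlitz module structure on
an `𝔽_q[T]`-algebra. -/
noncomputable def carlitzT : AddMonoid.End R where
  toFun x := algebraMap Fq[X] R X * x + x ^ Fintype.card Fq
  map_zero' := by rw [mul_zero, zero_pow Fintype.card_ne_zero, add_zero]
  map_add' x y := by
    rw [add_pow_card_of_ringHom ((algebraMap Fq[X] R).comp C)]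
    ring

/-- The Carlitz module structure on an arbitrary `𝔽_q[T]`-algebra `R`, as a ring homomorphism into
the additive endomorphisms of `R`; `carlitz Fq R f x` is the paper's `x ^ f`. It is kept apart from
a `Module` instance because `R` is already an `𝔽_q[T]`-module through its algebra structure. -/
noncomputable def carlitz : Fq[X] →+* AddMonoid.End R :=
  eval₂RingHom' ((Module.toAddMonoidEnd R R).comp ((algebraMap Fq[X] R).comp C)) (carlitzT Fq R)
    fun c => by
      ext x
      change algebraMap Fq[X] R (C c) * (algebraMap Fq[X] R X * x + x ^ Fintype.card Fq) =
        algebraMap Fq[X] R X * (algebraMap Fq[X] R (C c) * x) +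
          (algebraMap Fq[X] R (C c) * x) ^ Fintype.card Fq
      rw [mul_pow, ← map_pow, ← C_pow, FiniteField.pow_card]
      ring

variable {Fq R}

theorem carlitz_C (c : Fq) (x : R) : carlitz Fq R (C c) x = algebraMap Fq[X] R (C c) * x :=
  DFunLike.congr_fun (eval₂_C _ _) x

theorem carlitz_X (x : R) :
    carlitz Fq R X x = algebraMap Fq[X] R X * x + x ^ Fintype.card Fq :=
  DFunLike.congr_fun (eval₂_X _ _) x

theorem carlitz_add (f g : Fq[X]) (x : R) :
    carlitz Fq R (f + g) x = carlitz Fq R f x + carlitz Fq R g x := by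
  rw [map_add]; rfl

theorem carlitz_mul (f g : Fq[X]) (x : R) :
    carlitz Fq R (f * g) x = carlitz Fq R f (carlitz Fq R g x) := by
  rw [map_mul]; rfl

theorem carlitz_mul_X (f : Fq[X]) (x : R) :
    carlitz Fq R (f * X) x =
      algebraMap Fq[X] R X * carlitz Fq R f x + carlitz Fq R f x ^ Fintype.card Fq := by
  rw [mul_comm, carlitz_mul, carlitz_X]

theorem map_carlitz {R' : Type*} [CommRing R'] [Algebra Fq[X] R'] (h : R →ₐ[Fq[X]] R')
    (f : Fq[X]) (x : R) : h (carlitz Fq R f x) = carlitz Fq R' f (h x) := by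
  induction f using Polynomial.recOnHorner with
  | M0 => simp
  | MC f c _ _ ih =>
    rw [carlitz_add, carlitz_add, carlitz_C, carlitz_C, map_add, map_mul, h.commutes, ih]
  | MX f _ ih => rw [carlitz_mul_X, carlitz_mul_X, map_add, map_mul, map_pow, h.commutes, ih]

theorem carlitz_eq_mul (f : Fq[X]) (x : R) :
    ∃ y : R, carlitz Fq R f x = x * (algebraMap Fq[X] R f + x * y) := by
  obtain ⟨r, hr⟩ := Nat.exists_eq_add_of_le' (Fintype.one_lt_card (α := Fq))
  induction f using Polynomial.recOnHorner with
  | M0 => exact ⟨0, by simp⟩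
  | MC f c _ _ ih =>
    obtain ⟨y, hy⟩ := ih
    exact ⟨y, by rw [carlitz_add, carlitz_C, hy, map_add]; ring⟩
  | MX f _ ih =>
    obtain ⟨y, hy⟩ := ih
    refine ⟨algebraMap Fq[X] R X * y + x ^ r * (algebraMap Fq[X] R f + x * y) ^ Fintype.card Fq, ?_⟩
    rw [carlitz_mul_X, hy, mul_pow, map_mul, hr]
    ring

theorem eq_zero_of_carlitz_eq_zero_of_mem [IsDomain R] {I : Ideal R} {M : Fq[X]}
    (hM : algebraMap Fq[X] R M ∉ I) {x : R} (hxI : x ∈ I) (hx : carlitz Fq R M x = 0) : x = 0 := by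
  obtain ⟨y, hy⟩ := carlitz_eq_mul M x
  refine (mul_eq_zero.mp (hy.symm.trans hx)).resolve_right fun h => hM ?_
  rw [eq_neg_of_add_eq_zero_left h]
  exact I.neg_mem (I.mul_mem_right y hxI)

end CarlitzAction

section CarlitzPoly

variable {Fq : Type*} [Field Fq] [Fintype Fq]

/-- The Carlitz polynomial of `f`, i.e. `u ^ f` for an indeterminate `u`, with coefficients in
`𝔽_q[T]`. -/
noncomputable def carlitzPoly (f : Fq[X]) : Fq[X][X] := carlitz Fq Fq[X][X] f X

theorem aeval_carlitzPoly {R : Type*} [CommRing R] [Algebra Fq[X] R] (f : Fq[X]) (x : R) :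
    aeval x (carlitzPoly f) = carlitz Fq R f x := by
  rw [carlitzPoly, map_carlitz, aeval_X]

theorem carlitzPoly_add_C (f : Fq[X]) (c : Fq) :
    carlitzPoly (f + C c) = carlitzPoly f + C (C c) * X := by
  rw [carlitzPoly, carlitz_add, carlitz_C]; rfl

theorem carlitzPoly_mul_X (f : Fq[X]) :
    carlitzPoly (f * X) = C X * carlitzPoly f + carlitzPoly f ^ Fintype.card Fq :=
  carlitz_mul_X f X

theorem derivative_carlitzPoly (f : Fq[X]) : derivative (carlitzPoly f) = C f := by
  have card_eq_zero : ((Fintype.card Fq : ℕ) : Fq[X]) = 0 := by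
    rw [← map_natCast (C : Fq →+* Fq[X]), FiniteField.cast_card_eq_zero, C_0]
  induction f using Polynomial.recOnHorner with
  | M0 => simp [carlitzPoly]
  | MC f c _ _ ih => simp [carlitzPoly_add_C, ih]
  | MX f _ ih => simp [carlitzPoly_mul_X, derivative_pow, ih, card_eq_zero, mul_comm]

theorem carlitzPoly_eq_divX (f : Fq[X]) :
    carlitzPoly f = (C X * carlitzPoly f.divX + C (C (f.coeff 0)) * X) +
      carlitzPoly f.divX ^ Fintype.card Fq := by
  conv_lhs => rw [← divX_mul_X_add f, carlitzPoly_add_C, carlitzPoly_mul_X]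
  ring

theorem monic_carlitzPoly_and_natDegree_eq {f : Fq[X]} (hf : f.Monic) :
    (carlitzPoly f).Monic ∧ (carlitzPoly f).natDegree = Fintype.card Fq ^ f.natDegree := by
  have one_lt_card : 1 < Fintype.card Fq := Fintype.one_lt_card
  induction hn : f.natDegree generalizing f with
  | zero =>
    obtain rfl := hf.natDegree_eq_zero.mp hn
    simp [carlitzPoly]
  | succ n ih =>
    have natDegree_divX : f.divX.natDegree = n := by
      rw [natDegree_divX_eq_natDegree_tsub_one, hn, Nat.add_sub_cancel]
    have monic_divX : f.divX.Monic := by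
      rw [Monic, leadingCoeff, natDegree_divX, coeff_divX, ← hn, hf.coeff_natDegree]
    obtain ⟨hmonic, hdeg⟩ := ih monic_divX natDegree_divX
    set g := carlitzPoly f.divX
    have natDegree_pow : (g ^ Fintype.card Fq).natDegree = Fintype.card Fq ^ (n + 1) := by
      rw [hmonic.natDegree_pow, hdeg, pow_succ']
    have natDegree_lt : (C X * g + C (C (f.coeff 0)) * X).natDegree <
        (g ^ Fintype.card Fq).natDegree := by
      rw [natDegree_pow]
      refine (natDegree_add_le _ _).trans_lt (max_lt ?_ ?_)
      · refine (natDegree_C_mul_le _ _).trans_lt ?_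
        rw [hdeg]
        exact Nat.pow_lt_pow_right one_lt_card n.lt_succ_self
      · refine (natDegree_C_mul_le _ _).trans_lt ?_
        rw [natDegree_X]
        exact Nat.one_lt_pow n.succ_ne_zero one_lt_card
    rw [carlitzPoly_eq_divX]
    exact ⟨(hmonic.pow _).add_of_right (degree_lt_degree natDegree_lt),
      by rw [natDegree_add_eq_right_of_natDegree_lt natDegree_lt, natDegree_pow]⟩

theorem isIntegral_of_carlitz_eq_zero {R : Type*} [CommRing R] [Algebra Fq[X] R] {f : Fq[X]}
    (hf : f ≠ 0) {x : R} (hx : carlitz Fq R f x = 0) : IsIntegral Fq[X] x := by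
  refine ⟨carlitzPoly (C f.leadingCoeff⁻¹ * f), (monic_carlitzPoly_and_natDegree_eq ?_).1, ?_⟩
  · rw [mul_comm]
    exact monic_mul_leadingCoeff_inv hf
  · rw [← aeval_def, aeval_carlitzPoly, carlitz_mul, hx, map_zero]

end CarlitzPoly

theorem natCard_quotient_span_singleton {F : Type*} [Field F] [Fintype F] {f : F[X]}
    (hf : f ≠ 0) : Nat.card (F[X] ⧸ Ideal.span {f}) = Fintype.card F ^ f.natDegree := by
  have : Module.Finite F (F[X] ⧸ Ideal.span {f}) := (AdjoinRoot.powerBasis hf).finite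
  rw [Module.natCard_eq_pow_finrank (K := F), finrank_quotient_span_eq_natDegree,
    Nat.card_eq_fintype_card]

section Reduction

variable {Fq : Type*} [Field Fq] [Fintype Fq] {P : Fq[X]}

theorem dvd_of_carlitz_eq_zero {R : Type*} [CommRing R] [Algebra Fq[X] R] (hP : Irreducible P)
    {v : R} (hv : v ≠ 0) (hPv : carlitz Fq R P v = 0) {f : Fq[X]} (hfv : carlitz Fq R f v = 0) :
    P ∣ f := by
  by_contra hPf
  obtain ⟨a, b, hab⟩ := hP.coprime_iff_not_dvd.mpr hPf
  have : carlitz Fq R (a * P + b * f) v = 0 := by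
    rw [carlitz_add, carlitz_mul, carlitz_mul, hPv, hfv, map_zero, map_zero, add_zero]
  rw [hab, map_one] at this
  exact hv this

theorem card_pow_natDegree_le_ncard_rootSet {L : Type*} [Field L] [Algebra Fq[X] L]
    (hP : Irreducible P) {p : L[X]} (hp0 : p ≠ 0) (hp : ∀ x, p.eval x = carlitz Fq L P x)
    {v : L} (hv : v ≠ 0) (hPv : carlitz Fq L P v = 0) :
    Fintype.card Fq ^ P.natDegree ≤ (p.rootSet L).ncard := by
  have carlitz_mem (f : Fq[X]) : carlitz Fq L f v ∈ p.rootSet L := by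
    rw [mem_rootSet, coe_aeval_eq_eval, hp, ← carlitz_mul, mul_comm, carlitz_mul, hPv, map_zero]
    exact ⟨hp0, rfl⟩
  rw [← natCard_quotient_span_singleton hP.ne_zero, ← Nat.card_coe_set_eq]
  refine Nat.card_le_card_of_injective (fun a => ⟨carlitz Fq L a.out v, carlitz_mem _⟩) ?_
  intro a b hab
  have hsub : carlitz Fq L (a.out - b.out) v = 0 := by
    rw [map_sub]
    exact sub_eq_zero.mpr (Subtype.ext_iff.mp hab)
  rw [← Ideal.Quotient.mk_out a, ← Ideal.Quotient.mk_out b, Ideal.Quotient.eq,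
    Ideal.mem_span_singleton]
  exact dvd_of_carlitz_eq_zero hP hv hPv hsub

theorem map_carlitzPoly_eq_X_pow {L : Type*} [Field L] [IsAlgClosed L] [Algebra Fq[X] L]
    (hP : Irreducible P) (hmonic : P.Monic) (h0 : algebraMap Fq[X] L P = 0) :
    (carlitzPoly P).map (algebraMap Fq[X] L) = X ^ Fintype.card Fq ^ P.natDegree := by
  obtain ⟨hcmonic, hcdeg⟩ := monic_carlitzPoly_and_natDegree_eq hmonic
  set p := (carlitzPoly P).map (algebraMap Fq[X] L) with hp
  have hpmonic : p.Monic := hcmonic.map _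
  have hpdeg : p.natDegree = Fintype.card Fq ^ P.natDegree := by
    rw [hp, hcmonic.natDegree_map, hcdeg]
  have heval (x : L) : p.eval x = carlitz Fq L P x := by
    rw [hp, eval_map_algebraMap, aeval_carlitzPoly]
  -- The derivative of `p` vanishes, so `p` is inseparable, while a nonzero root would give it
  -- `natDegree p` distinct roots.
  have not_separable : ¬ p.Separable := fun h => by
    rw [Separable, hp, derivative_map, derivative_carlitzPoly, map_C, h0, C_0, isCoprime_zero_right,
      ← hp, hpmonic.isUnit_iff, ← hpmonic.natDegree_eq_zero, hpdeg] at h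
    exact pow_ne_zero _ Fintype.card_ne_zero h
  have eq_zero_of_mem_roots (v : L) (hv : v ∈ p.roots) : v = 0 := by
    rw [mem_roots hpmonic.ne_zero, IsRoot, heval] at hv
    by_contra hv0
    refine not_separable ((card_rootSet_eq_natDegree_iff_of_splits hpmonic.ne_zero
      (IsAlgClosed.splits (p.map (algebraMap L L)))).mp ?_)
    rw [← Nat.card_eq_fintype_card, Nat.card_coe_set_eq]
    exact (ncard_rootSet_le p L).antisymm
      (hpdeg.le.trans (card_pow_natDegree_le_ncard_rootSet hP hpmonic.ne_zero heval hv0 hv))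
  have roots_eq : p.roots = Multiset.replicate p.natDegree 0 :=
    Multiset.eq_replicate.mpr
      ⟨(IsAlgClosed.splits p).natDegree_eq_card_roots.symm, eq_zero_of_mem_roots⟩
  rw [(IsAlgClosed.splits p).eq_prod_roots_of_monic hpmonic, roots_eq, hpdeg,
    Multiset.map_replicate, Multiset.prod_replicate, C_0, sub_zero]

theorem C_dvd_carlitzPoly_sub_X_pow (hP : Irreducible P) (hmonic : P.Monic) :
    C P ∣ carlitzPoly P - X ^ Fintype.card Fq ^ P.natDegree := by
  have : (Ideal.span {P}).IsMaximal := PrincipalIdealRing.isMaximal_of_irreducible hP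
  let : Field (Fq[X] ⧸ Ideal.span {P}) := Ideal.Quotient.field _
  let L := AlgebraicClosure (Fq[X] ⧸ Ideal.span {P})
  have algebraMap_eq_zero_iff (f : Fq[X]) : algebraMap Fq[X] L f = 0 ↔ P ∣ f := by
    rw [IsScalarTower.algebraMap_apply Fq[X] (Fq[X] ⧸ Ideal.span {P}) L, map_eq_zero,
      Ideal.Quotient.algebraMap_eq, Ideal.Quotient.eq_zero_iff_dvd]
  have map_eq_zero : (carlitzPoly P - X ^ Fintype.card Fq ^ P.natDegree).map
      (algebraMap Fq[X] L) = 0 := by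
    rw [Polynomial.map_sub, Polynomial.map_pow, map_X,
      map_carlitzPoly_eq_X_pow hP hmonic ((algebraMap_eq_zero_iff P).mpr dvd_rfl), sub_self]
  refine (C_dvd_iff_dvd_coeff _ _).mpr fun i => (algebraMap_eq_zero_iff _).mp ?_
  rw [← coeff_map, map_eq_zero, coeff_zero]

theorem algebraMap_dvd_carlitz_sub_pow {R : Type*} [CommRing R] [Algebra Fq[X] R]
    (hP : Irreducible P) (hmonic : P.Monic) (x : R) :
    algebraMap Fq[X] R P ∣ carlitz Fq R P x - x ^ Fintype.card Fq ^ P.natDegree := by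
  simpa [aeval_carlitzPoly] using map_dvd (aeval x) (C_dvd_carlitzPoly_sub_X_pow hP hmonic)

end Reduction

section Frobenius

theorem exists_galRestrict_isArithFrobAt {A K L B : Type*} [CommRing A] [IsDomain A]
    [IsNoetherianRing A] [IsIntegrallyClosed A] [Field K] [Algebra A K] [IsFractionRing A K]
    [Field L] [Algebra K L] [Algebra A L] [IsScalarTower A K L] [FiniteDimensional K L]
    [IsGalois K L] [CommRing B] [Algebra A B] [Algebra B L] [IsScalarTower A B L]
    [IsIntegralClosure B A L] (p : Ideal A) [p.IsMaximal] [Finite (A ⧸ p)] :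
    ∃ (σ : Gal(L/K)) (Q : Ideal B), Q.under A = p ∧
      (galRestrict A K L B σ : B →ₐ[A] B).IsArithFrobAt Q := by
  have : IsDomain B := (IsIntegralClosure.algebraMap_injective B A L).isDomain
  have : IsFractionRing B L := IsIntegralClosure.isFractionRing_of_finite_extension A K L B
  have : FaithfulSMul A L := .trans A K L
  have : FaithfulSMul A B := .tower_bot A B L
  let : MulSemiringAction Gal(L/K) B := IsIntegralClosure.MulSemiringAction A K L B
  have : SMulCommClass Gal(L/K) A B := ⟨fun σ => map_smul (galRestrict A K L B σ)⟩
  have : Algebra.IsInvariant A B Gal(L/K) := Algebra.isInvariant_of_isGalois A K L B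
  have : Module.Finite A B := IsIntegralClosure.finite A K L B
  obtain ⟨Q, _, hQ⟩ := Ideal.exists_maximal_ideal_liesOver_of_isIntegral (S := B) p
  have : Module.Finite (A ⧸ p) (B ⧸ Q) := Module.Finite.of_restrictScalars_finite A _ _
  have : Finite (B ⧸ Q) := Module.finite_of_finite (A ⧸ p)
  obtain ⟨σ, hσ⟩ := IsArithFrobAt.exists_of_isInvariant A Gal(L/K) Q
  exact ⟨σ, Q, hQ.over.symm, hσ⟩

variable {Fq : Type*} [Field Fq] [Fintype Fq] {M P : Fq[X]}

theorem apply_eq_carlitz_of_isArithFrobAt {S : Type*} [CommRing S] [IsDomain S] [Algebra Fq[X] S]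
    {φ : S →ₐ[Fq[X]] S} {Q : Ideal S} (hφ : φ.IsArithFrobAt Q)
    (hQ : Q.under Fq[X] = Ideal.span {P}) (hP : Irreducible P) (hmonic : P.Monic)
    (hPM : ¬ P ∣ M) {x : S} (hx : carlitz Fq S M x = 0) :
    φ x = carlitz Fq S P x := by
  have mem_iff (f : Fq[X]) : algebraMap Fq[X] S f ∈ Q ↔ P ∣ f := by
    rw [← Ideal.mem_span_singleton, ← hQ, Ideal.under_def, Ideal.mem_comap]
  have sub_pow_mem : φ x - x ^ Fintype.card Fq ^ P.natDegree ∈ Q := by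
    simpa only [hQ, natCard_quotient_span_singleton hP.ne_zero] using hφ x
  have carlitz_sub_pow_mem : carlitz Fq S P x - x ^ Fintype.card Fq ^ P.natDegree ∈ Q :=
    Q.mem_of_dvd (algebraMap_dvd_carlitz_sub_pow hP hmonic x) ((mem_iff P).mpr dvd_rfl)
  refine sub_eq_zero.mp (eq_zero_of_carlitz_eq_zero_of_mem (mt (mem_iff M).mp hPM) ?_ ?_)
  · simpa only [sub_sub_sub_cancel_right] using Q.sub_mem sub_pow_mem carlitz_sub_pow_mem
  · rw [map_sub, ← map_carlitz, ← carlitz_mul, mul_comm, carlitz_mul, hx, map_zero, map_zero,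
      sub_zero]

variable {k L : Type*} [Field k] [Algebra Fq[X] k] [IsFractionRing Fq[X] k] [Field L] [Algebra k L]
  [Algebra Fq[X] L] [IsScalarTower Fq[X] k L]

theorem exists_galois_apply_eq_carlitz_of_prime [FiniteDimensional k L] [IsGalois k L]
    (hM : M ≠ 0) (hP : Irreducible P) (hmonic : P.Monic) (hPM : ¬ P ∣ M) :
    ∃ σ : Gal(L/k), ∀ x : L, carlitz Fq L M x = 0 → σ x = carlitz Fq L P x := by
  have : (Ideal.span {P}).IsMaximal := PrincipalIdealRing.isMaximal_of_irreducible hP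
  have : Finite (Fq[X] ⧸ Ideal.span {P}) := Nat.finite_of_card_ne_zero <| by
    rw [natCard_quotient_span_singleton hP.ne_zero]
    exact pow_ne_zero _ Fintype.card_ne_zero
  let S := integralClosure Fq[X] L
  obtain ⟨σ, Q, hQ, hσ⟩ := exists_galRestrict_isArithFrobAt (K := k) (L := L) (B := S)
    (Ideal.span {P})
  refine ⟨σ, fun x hx => ?_⟩
  let y : S := ⟨x, isIntegral_of_carlitz_eq_zero hM hx⟩
  have hy : carlitz Fq S M y = 0 := Subtype.ext ((map_carlitz S.val M y).trans hx)
  calc σ x = S.val (galRestrict Fq[X] k L S σ y) := (algebraMap_galRestrict_apply Fq[X] σ y).symm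
    _ = S.val (carlitz Fq S P y) :=
      congrArg S.val (apply_eq_carlitz_of_isArithFrobAt hσ hQ hP hmonic hPM hy)
    _ = carlitz Fq L P x := map_carlitz S.val P y

end Frobenius

section TorsionMultipliers

variable {Fq : Type*} [Field Fq] [Fintype Fq]
variable {k Ω : Type*} [Field k] [Algebra Fq[X] k] [Field Ω] [Algebra k Ω] [Algebra Fq[X] Ω]
  [IsScalarTower Fq[X] k Ω]
variable {M B B' : Fq[X]}

theorem galois_carlitz (σ : Gal(Ω/k)) (f : Fq[X]) (x : Ω) :
    σ (carlitz Fq Ω f x) = carlitz Fq Ω f (σ x) :=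
  map_carlitz ((σ : Ω →ₐ[k] Ω).restrictScalars Fq[X]) f x

theorem coe_carlitz (E : IntermediateField k Ω) (f : Fq[X]) (x : E) :
    ((carlitz Fq E f x : E) : Ω) = carlitz Fq Ω f x :=
  map_carlitz (E.val.restrictScalars Fq[X]) f x

theorem carlitz_congr {R : Type*} [CommRing R] [Algebra Fq[X] R] (hB : M ∣ B - B') {x : R}
    (hx : carlitz Fq R M x = 0) : carlitz Fq R B x = carlitz Fq R B' x := by
  obtain ⟨g, hg⟩ := hB
  rw [eq_add_of_sub_eq' hg, carlitz_add, mul_comm, carlitz_mul, hx, map_zero, add_zero]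

variable (k Ω M) in
/-- The submonoid of those `B` for which some `σ ∈ Gal(Ω/k)` acts on the `M`-torsion points by
`λ ↦ λ ^ B`, i.e. for which the automorphism `σ_B` of the torsion field exists. -/
def torsionMultipliers : Submonoid Fq[X] where
  carrier := {B | ∃ σ : Gal(Ω/k), ∀ x, carlitz Fq Ω M x = 0 → σ x = carlitz Fq Ω B x}
  one_mem' := ⟨1, fun x _ => by rw [map_one]; rfl⟩
  mul_mem' := by
    rintro B B' ⟨σ, hσ⟩ ⟨σ', hσ'⟩
    refine ⟨σ' * σ, fun x hx => ?_⟩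
    rw [AlgEquiv.mul_apply, hσ x hx, galois_carlitz, hσ' x hx, carlitz_mul]

theorem mem_torsionMultipliers_of_dvd_sub (hB : B ∈ torsionMultipliers k Ω M) (h : M ∣ B - B') :
    B' ∈ torsionMultipliers k Ω M := by
  obtain ⟨σ, hσ⟩ := hB
  exact ⟨σ, fun x hx => (hσ x hx).trans (carlitz_congr h hx)⟩

theorem separable_map_carlitzPoly [IsFractionRing Fq[X] k] (hM : M ≠ 0) :
    ((carlitzPoly M).map (algebraMap Fq[X] k)).Separable := by
  have : algebraMap Fq[X] k M ≠ 0 := by simpa using hM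
  rw [Separable, derivative_map, derivative_carlitzPoly, map_C]
  exact isCoprime_one_right.of_isCoprime_of_dvd_right (isUnit_C.mpr this.isUnit).dvd

variable [IsFractionRing Fq[X] k] [Normal k Ω] [IsAlgClosed Ω]

theorem mem_torsionMultipliers_of_prime {P : Fq[X]} (hM : M ≠ 0) (hP : Irreducible P)
    (hmonic : P.Monic) (hPM : ¬ P ∣ M) : P ∈ torsionMultipliers k Ω M := by
  let p := (carlitzPoly M).map (algebraMap Fq[X] k)
  let K := adjoin k (p.rootSet Ω)
  have hsep : p.Separable := separable_map_carlitzPoly hM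
  have : p.IsSplittingField k K := adjoin_rootSet_isSplittingField (IsAlgClosed.splits _)
  have : FiniteDimensional k K := IsSplittingField.finiteDimensional K p
  have : IsGalois k K := IsGalois.of_separable_splitting_field hsep
  obtain ⟨σ, hσ⟩ := exists_galois_apply_eq_carlitz_of_prime (k := k) (L := K) hM hP hmonic hPM
  refine ⟨σ.liftNormal Ω, fun x hx => ?_⟩
  have hxK : x ∈ K := by
    refine subset_adjoin _ _ ((mem_rootSet_of_ne hsep.ne_zero).mpr ?_)
    rw [aeval_map_algebraMap, aeval_carlitzPoly, hx]
  calc σ.liftNormal Ω x = (σ ⟨x, hxK⟩ : Ω) := σ.liftNormal_commutes Ω ⟨x, hxK⟩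
    _ = (carlitz Fq K P ⟨x, hxK⟩ : K) :=
      congrArg _ (hσ ⟨x, hxK⟩ (Subtype.ext ((coe_carlitz K M _).trans hx)))
    _ = carlitz Fq Ω P x := coe_carlitz K P _

theorem mem_torsionMultipliers_of_monic (hM : M ≠ 0) (hB : B.Monic) (hBM : IsCoprime B M) :
    B ∈ torsionMultipliers k Ω M := by
  classical
  rw [← hB.normalize_eq_self, ← UniqueFactorizationMonoid.prod_normalizedFactors_eq hB.ne_zero]
  refine Submonoid.multiset_prod_mem _ _ fun P hP => ?_
  have hirr := UniqueFactorizationMonoid.irreducible_of_normalized_factor P hP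
  refine mem_torsionMultipliers_of_prime hM hirr ?_ ?_
  · rw [← UniqueFactorizationMonoid.normalize_normalized_factor P hP]
    exact monic_normalize hirr.ne_zero
  · exact fun hPM => hirr.not_isUnit
      (hBM.isUnit_of_dvd' (UniqueFactorizationMonoid.dvd_of_mem_normalizedFactors hP) hPM)

theorem exists_monic_dvd_sub {F : Type*} [Field F] {M : F[X]} (hM : M ≠ 0) (B : F[X]) :
    ∃ B' : F[X], B'.Monic ∧ M ∣ B' - B := by
  have hmonic : (M * C M.leadingCoeff⁻¹ * X ^ (B.natDegree + 1)).Monic :=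
    (monic_mul_leadingCoeff_inv hM).mul (monic_X_pow _)
  refine ⟨B + M * C M.leadingCoeff⁻¹ * X ^ (B.natDegree + 1), hmonic.add_of_right ?_, ?_⟩
  · refine degree_lt_degree ?_
    rw [(monic_mul_leadingCoeff_inv hM).natDegree_mul (monic_X_pow _), natDegree_X_pow]
    lia
  · rw [add_sub_cancel_left, mul_assoc]
    exact dvd_mul_right _ _

theorem mem_torsionMultipliers_of_isCoprime (hM : M ≠ 0) (hB : IsCoprime B M) :
    B ∈ torsionMultipliers k Ω M := by
  obtain ⟨B', hmonic, g, hg⟩ := exists_monic_dvd_sub hM B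
  refine mem_torsionMultipliers_of_dvd_sub (mem_torsionMultipliers_of_monic hM hmonic ?_) ⟨g, hg⟩
  rw [eq_add_of_sub_eq' hg]
  exact hB.add_mul_left_left g

end TorsionMultipliers

section SumsOfUnits

theorem isCoprime_of_forall_isMaximal {R : Type*} [CommRing R] {M g : R}
    (h : ∀ m : Ideal R, m.IsMaximal → M ∈ m → g ∉ m) : IsCoprime g M := by
  by_contra hgM
  rw [← Ideal.isCoprime_span_singleton_iff, Ideal.isCoprime_iff_sup_eq] at hgM
  obtain ⟨m, hm, hle⟩ := Ideal.exists_le_maximal _ hgM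
  rw [sup_le_iff, Ideal.span_singleton_le_iff_mem, Ideal.span_singleton_le_iff_mem] at hle
  exact h m hm hle.2 hle.1

theorem exists_isCoprime_and_isCoprime_sub {R : Type*} [CommRing R] {M f : R}
    (hfin : {m : Ideal R | m.IsMaximal ∧ M ∈ m}.Finite)
    (h : ∀ m : Ideal R, m.IsMaximal → M ∈ m → ∃ r, r ∉ m ∧ f - r ∉ m) :
    ∃ g, IsCoprime g M ∧ IsCoprime (f - g) M := by
  let S := {m : Ideal R | m.IsMaximal ∧ M ∈ m}
  have : Finite S := hfin.to_subtype
  choose r hr hfr using fun m : S => h m m.2.1 m.2.2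
  obtain ⟨g, hg⟩ := Ideal.exists_forall_sub_mem_ideal (I := fun m : S => m.1)
    (fun m n hmn => Ideal.isCoprime_iff_sup_eq.mpr
      (m.2.1.coprime_of_ne n.2.1 (Subtype.coe_ne_coe.mpr hmn))) r
  refine ⟨g, isCoprime_of_forall_isMaximal fun m hm hMm hgm => hr ⟨m, hm, hMm⟩ ?_,
    isCoprime_of_forall_isMaximal fun m hm hMm hgm => hfr ⟨m, hm, hMm⟩ ?_⟩
  · simpa only [sub_sub_cancel] using m.sub_mem hgm (hg ⟨m, hm, hMm⟩)
  · simpa only [sub_add_sub_cancel] using m.add_mem hgm (hg ⟨m, hm, hMm⟩)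

theorem exists_notMem_and_sub_notMem {R : Type*} [CommRing R] {m : Ideal R} {u v : R} (f : R)
    (hu : u ∉ m) (hv : v ∉ m) (huv : u - v ∉ m) : ∃ r, r ∉ m ∧ f - r ∉ m := by
  by_cases hfu : f - u ∈ m
  · refine ⟨v, hv, fun hfv => huv ?_⟩
    simpa only [sub_sub_sub_cancel_left] using m.sub_mem hfv hfu
  · exact ⟨u, hu, hfu⟩

variable {F : Type*} [Field F] {M : F[X]}

theorem finite_setOf_isMaximal_and_mem (hM : M ≠ 0) :
    {m : Ideal F[X] | m.IsMaximal ∧ M ∈ m}.Finite := by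
  have hspan : Ideal.span {M} ≠ ⊥ := mt Ideal.span_singleton_eq_bot.mp hM
  have := UniqueFactorizationMonoid.fintypeSubtypeDvd (Ideal.span {M}) hspan
  have hfin : {m : Ideal F[X] | m ∣ Ideal.span {M}}.Finite :=
    Set.finite_coe_iff.mp (Finite.of_fintype {m // m ∣ Ideal.span {M}})
  exact hfin.subset fun m hm => Ideal.dvd_span_singleton.mpr hm.2

theorem C_notMem {m : Ideal F[X]} (hm : m ≠ ⊤) {c : F} (hc : c ≠ 0) : C c ∉ m :=
  fun h => hm (m.eq_top_of_isUnit_mem h (isUnit_C.mpr hc.isUnit))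

theorem exists_isCoprime_and_isCoprime_sub_of_ne {u v : F} (hu : u ≠ 0) (hv : v ≠ 0) (huv : u ≠ v)
    (hM : M ≠ 0) (f : F[X]) : ∃ g, IsCoprime g M ∧ IsCoprime (f - g) M := by
  refine exists_isCoprime_and_isCoprime_sub (finite_setOf_isMaximal_and_mem hM) fun m hm _ =>
    exists_notMem_and_sub_notMem f (C_notMem hm.ne_top hu) (C_notMem hm.ne_top hv) ?_
  rw [← C_sub]
  exact C_notMem hm.ne_top (sub_ne_zero.mpr huv)

theorem exists_isCoprime_and_isCoprime_sub_of_isRoot {a : F} (ha : ∀ b, X - C b ∣ M → b = a)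
    (hM : M ≠ 0) {f : F[X]} (hf : f.IsRoot a) : ∃ g, IsCoprime g M ∧ IsCoprime (f - g) M := by
  refine exists_isCoprime_and_isCoprime_sub (finite_setOf_isMaximal_and_mem hM) fun m hm hMm => ?_
  have one_notMem : (1 : F[X]) ∉ m := m.ne_top_iff_one.mp hm.ne_top
  by_cases ham : X - C a ∈ m
  · have hfm : f ∈ m := m.mem_of_dvd (dvd_iff_isRoot.mpr hf) ham
    exact ⟨1, one_notMem, fun h => one_notMem ((m.sub_mem_iff_right hfm).mp h)⟩
  · have notMem (b : F) : X - C b ∉ m := fun hbm => by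
      have : (Ideal.span {X - C b}).IsMaximal :=
        PrincipalIdealRing.isMaximal_of_irreducible (irreducible_X_sub_C b)
      have heq := this.eq_of_le hm.ne_top ((Ideal.span_singleton_le_iff_mem m).mpr hbm)
      rw [← heq, Ideal.mem_span_singleton] at hMm
      exact ham (ha b hMm ▸ hbm)
    refine exists_notMem_and_sub_notMem f (notMem a) one_notMem ?_
    simpa only [C_add, C_1, sub_sub] using notMem (a + 1)

theorem exists_forall_X_sub_C_dvd_imp_eq [Fintype F] (hcard : Fintype.card F = 2)
    (hM : ¬ X * (X + 1) ∣ M) : ∃ a, ∀ b, X - C b ∣ M → b = a := by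
  have sq_eq (c : F) : c ^ 2 = c := by rw [← hcard, FiniteField.pow_card]
  have neg_one : (-1 : F) = 1 := by rw [← sq_eq (-1), neg_one_sq]
  have eq_zero_or_one (c : F) : c = 0 ∨ c = 1 := by
    rw [← IsIdempotentElem.iff_eq_zero_or_one, isIdempotentElem_iff, ← sq, sq_eq]
  have X_sub_C_one : (X : F[X]) - C 1 = X + 1 := by
    rw [← neg_one, C_neg, C_1, sub_neg_eq_add]
  by_cases hX : X ∣ M
  · refine ⟨0, fun b hb => (eq_zero_or_one b).resolve_right ?_⟩
    rintro rfl
    rw [X_sub_C_one] at hb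
    exact hM (IsCoprime.mul_dvd ⟨-1, 1, by ring⟩ hX hb)
  · refine ⟨1, fun b hb => (eq_zero_or_one b).resolve_left ?_⟩
    rintro rfl
    exact hX (by simpa only [C_0, sub_zero] using hb)

theorem closure_setOf_isCoprime_eq_top [Fintype F] (hM : M ≠ 0)
    (hq : ¬ (Fintype.card F = 2 ∧ X * (X + 1) ∣ M)) :
    AddSubmonoid.closure {g | IsCoprime g M} = ⊤ := by
  have mem_of_exists {f : F[X]} (h : ∃ g, IsCoprime g M ∧ IsCoprime (f - g) M) :
      f ∈ AddSubmonoid.closure {g | IsCoprime g M} := by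
    obtain ⟨g, hg, hfg⟩ := h
    rw [← add_sub_cancel g f]
    exact add_mem (AddSubmonoid.mem_closure_of_mem hg) (AddSubmonoid.mem_closure_of_mem hfg)
  refine top_le_iff.mp fun f _ => ?_
  by_cases hcard : Fintype.card F = 2
  · obtain ⟨a, ha⟩ := exists_forall_X_sub_C_dvd_imp_eq hcard fun h => hq ⟨hcard, h⟩
    have mem_of_isRoot {f : F[X]} (hf : f.IsRoot a) := mem_of_exists
      (exists_isCoprime_and_isCoprime_sub_of_isRoot ha hM hf)
    by_cases hfa : f.eval a = 0
    · exact mem_of_isRoot hfa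
    · have hC : IsCoprime (C (f.eval a)) M :=
        isCoprime_one_left.of_isCoprime_of_dvd_left (isUnit_C.mpr (Ne.isUnit hfa)).dvd
      rw [← add_sub_cancel (C (f.eval a)) f]
      exact add_mem (AddSubmonoid.mem_closure_of_mem hC) (mem_of_isRoot (by simp))
  · have : 2 < Fintype.card F := (Nat.succ_le_of_lt Fintype.one_lt_card).lt_of_ne' hcard
    obtain ⟨a, b, c, hab, hac, hbc⟩ := Fintype.two_lt_card_iff.mp this
    exact mem_of_exists (exists_isCoprime_and_isCoprime_sub_of_ne (sub_ne_zero.mpr hab.symm)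
      (sub_ne_zero.mpr hac.symm) (sub_left_injective.ne hbc) hM f)

theorem exists_eq_sum_isCoprime [Fintype F] (hM : M ≠ 0)
    (hq : ¬ (Fintype.card F = 2 ∧ X * (X + 1) ∣ M)) (f : F[X]) :
    ∃ (n : ℕ) (g : Fin n → F[X]), (∀ i, IsCoprime (g i) M) ∧ f = ∑ i, g i := by
  have hf : f ∈ AddSubmonoid.closure {g | IsCoprime g M} :=
    closure_setOf_isCoprime_eq_top hM hq ▸ AddSubmonoid.mem_top f
  obtain ⟨l, hl, rfl⟩ := AddSubmonoid.exists_list_of_mem_closure hf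
  exact ⟨l.length, l.get, fun i => hl _ (l.get_mem i), (Fin.sum_univ_getElem l).symm⟩

end SumsOfUnits

section KummerMultiple

variable {A V G : Type*} [CommRing A] [AddCommGroup V] [Group G] [DistribMulAction G V]

/-- `ρ` is `f` times `τ` for the `A`-module structure on Galois groups of Kummer extensions: on the
set `D` of Kummer generators, the displacement `ρ α - α` is `f` times the displacement `τ α - α`
under the `A`-action `φ`. -/
def IsKummerMultiple (φ : A →+* AddMonoid.End V) (D : Set V) (f : A) (τ ρ : G) : Prop :=
  ∀ α ∈ D, ρ • α - α = φ f (τ • α - α)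

variable {φ : A →+* AddMonoid.End V} {M f g : A} {D : Set V} {s τ τ' ρ ρ' : G}

theorem mul_smul_sub_of_mem_fixingSubgroup (hD : ∀ s : G, ∀ α ∈ D, φ M (s • α - α) = 0)
    (hτ : τ ∈ fixingSubgroup G {x | φ M x = 0}) {α : V} (hα : α ∈ D) :
    (τ * τ') • α - α = (τ • α - α) + (τ' • α - α) := by
  have hfix : τ • (τ' • α - α) = τ' • α - α :=
    (mem_fixingSubgroup_iff G).mp hτ _ (hD τ' α hα)
  rw [smul_sub, ← mul_smul] at hfix
  rw [← hfix]
  abel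

namespace IsKummerMultiple

theorem one_left (τ : G) : IsKummerMultiple φ D 1 τ τ := fun α _ => by
  rw [map_one]; rfl

theorem zero_left (τ : G) : IsKummerMultiple φ D 0 τ (1 : G) := fun α _ => by
  rw [map_zero, one_smul, sub_self]; rfl

theorem comp (h : IsKummerMultiple φ D g τ ρ) (h' : IsKummerMultiple φ D f ρ ρ') :
    IsKummerMultiple φ D (f * g) τ ρ' := fun α hα => by
  rw [h' α hα, h α hα, map_mul]; rfl

theorem mem_fixingSubgroup (h : IsKummerMultiple φ D f τ ρ) (hMD : {x | φ M x = 0} ⊆ D)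
    (hτ : τ ∈ fixingSubgroup G {x | φ M x = 0}) : ρ ∈ fixingSubgroup G {x | φ M x = 0} := by
  rw [mem_fixingSubgroup_iff] at hτ ⊢
  intro x hx
  rw [← sub_eq_zero, h x (hMD hx), hτ x hx, sub_self, map_zero]

theorem unique (hG : ∀ s s' : G, (∀ α ∈ D, s • α = s' • α) → s = s')
    (h : IsKummerMultiple φ D f τ ρ) (h' : IsKummerMultiple φ D f τ ρ') : ρ = ρ' :=
  hG ρ ρ' fun α hα => sub_left_injective ((h α hα).trans (h' α hα).symm)

section Torsion

variable (hD : ∀ s : G, ∀ α ∈ D, φ M (s • α - α) = 0)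
include hD

theorem congr_left (hfg : M ∣ f - g) (h : IsKummerMultiple φ D g τ ρ) :
    IsKummerMultiple φ D f τ ρ := by
  obtain ⟨a, ha⟩ := hfg
  intro α hα
  rw [h α hα, eq_add_of_sub_eq' ha, mul_comm, map_add, map_mul]
  change φ g (τ • α - α) = φ g (τ • α - α) + φ a (φ M (τ • α - α))
  rw [hD τ α hα, map_zero, add_zero]

theorem exponent (τ : G) : IsKummerMultiple φ D M τ (1 : G) :=
  congr_left hD (by rw [sub_zero]) (zero_left τ)

theorem conj (hτ : τ ∈ fixingSubgroup G {x | φ M x = 0})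
    (hs : ∀ x, φ M x = 0 → s • x = φ f x) : IsKummerMultiple φ D f τ (s * τ * s⁻¹) := by
  intro α hα
  have hfix : τ • (s⁻¹ • α - α) = s⁻¹ • α - α :=
    (mem_fixingSubgroup_iff G).mp hτ _ (hD s⁻¹ α hα)
  calc (s * τ * s⁻¹) • α - α = s • (τ • s⁻¹ • α - s⁻¹ • α) := by
        rw [smul_sub, smul_inv_smul, mul_smul, mul_smul]
    _ = s • (τ • α - α) := by
        rw [smul_sub, sub_eq_sub_iff_sub_eq_sub] at hfix
        rw [hfix]
    _ = φ f (τ • α - α) := hs _ (hD τ α hα)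

theorem add_left (hρ : ρ ∈ fixingSubgroup G {x | φ M x = 0}) (h : IsKummerMultiple φ D f τ ρ)
    (h' : IsKummerMultiple φ D g τ ρ') : IsKummerMultiple φ D (f + g) τ (ρ * ρ') := fun α hα => by
  rw [mul_smul_sub_of_mem_fixingSubgroup hD hρ hα, h α hα, h' α hα, map_add]
  rfl

theorem mul_right (hτ : τ ∈ fixingSubgroup G {x | φ M x = 0})
    (hρ : ρ ∈ fixingSubgroup G {x | φ M x = 0}) (h : IsKummerMultiple φ D f τ ρ)
    (h' : IsKummerMultiple φ D f τ' ρ') : IsKummerMultiple φ D f (τ * τ') (ρ * ρ') :=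
  fun α hα => by
    rw [mul_smul_sub_of_mem_fixingSubgroup hD hρ hα, mul_smul_sub_of_mem_fixingSubgroup hD hτ hα,
      h α hα, h' α hα, map_add]

theorem prod_ofFn (hMD : {x | φ M x = 0} ⊆ D) (hτ : τ ∈ fixingSubgroup G {x | φ M x = 0}) {n : ℕ}
    {g : Fin n → A} {ρ : Fin n → G} (h : ∀ i, IsKummerMultiple φ D (g i) τ (ρ i)) :
    IsKummerMultiple φ D (∑ i, g i) τ (List.ofFn ρ).prod := by
  induction n with
  | zero => simpa using zero_left τ
  | succ n ih =>
    rw [List.ofFn_succ, List.prod_cons, Fin.sum_univ_succ]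
    exact add_left hD ((h 0).mem_fixingSubgroup hMD hτ) (h 0) (ih fun i => h i.succ)

theorem prod_ofFn_conj (hMD : {x | φ M x = 0} ⊆ D) (hτ : τ ∈ fixingSubgroup G {x | φ M x = 0})
    {n : ℕ} {g : Fin n → A} (hfg : M ∣ f - ∑ i, g i) {s : Fin n → G}
    (hs : ∀ i, ∀ x, φ M x = 0 → s i • x = φ (g i) x) :
    IsKummerMultiple φ D f τ (List.ofFn fun i => s i * τ * (s i)⁻¹).prod :=
  congr_left hD hfg (prod_ofFn hD hMD hτ fun i => conj hD hτ (hs i))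

end Torsion

end IsKummerMultiple

end KummerMultiple

section KummerExtension

variable {Fq : Type*} [Field Fq] [Fintype Fq]
variable {k Ω : Type*} [Field k] [Field Ω] [Algebra k Ω] [Algebra Fq[X] Ω]
variable {M : Fq[X]} {Y : Set Ω} {E : IntermediateField k Ω}

theorem galois_ext_of_eq_adjoin_carlitz (hE : E = adjoin k {x | carlitz Fq Ω M x ∈ Y})
    {σ τ : Gal(E/k)} (h : ∀ α : E, carlitz Fq Ω M α ∈ Y → σ α = τ α) : σ = τ := by
  have : (σ : E →ₐ[k] E) = τ :=
    algHom_ext_of_eq_adjoin k hE fun x hx => h ⟨x, hE ▸ subset_adjoin _ _ hx⟩ hx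
  exact AlgEquiv.coe_toAlgHom_injective this

variable [Algebra Fq[X] k] [IsScalarTower Fq[X] k Ω]

theorem normal_of_eq_adjoin_carlitz [Normal k Ω] (hY : Y ⊆ Set.range (algebraMap k Ω))
    (hE : E = adjoin k {x | carlitz Fq Ω M x ∈ Y}) : Normal k E := by
  refine normal_iff_forall_map_le'.mpr fun σ => ?_
  rw [hE, adjoin_map]
  refine adjoin.mono k _ _ ?_
  rintro _ ⟨x, hx, rfl⟩
  obtain ⟨b, hb⟩ := hY hx
  have : carlitz Fq Ω M (σ x) = carlitz Fq Ω M x := by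
    rw [← galois_carlitz, ← hb, AlgEquiv.commutes]
  change carlitz Fq Ω M (σ x) ∈ Y
  exact this ▸ hx

theorem galois_eq_of_apply_eq_of_eq_adjoin {z : Ω}
    (hE : E = adjoin k {x | carlitz Fq Ω M x ∈ ({0, z} : Set Ω)}) {α : E}
    (hα : carlitz Fq Ω M α = z) {σ τ : Gal(E/k)}
    (htorsion : ∀ x : E, carlitz Fq E M x = 0 → σ x = τ x) (h : σ α = τ α) : σ = τ := by
  refine galois_ext_of_eq_adjoin_carlitz hE fun β hβ => ?_
  rcases hβ with hβ | hβ
  · exact htorsion β (Subtype.ext ((coe_carlitz E M β).trans hβ))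
  · have hsub : carlitz Fq E M (β - α) = 0 := by
      rw [map_sub, sub_eq_zero]
      exact Subtype.ext (by rw [coe_carlitz, coe_carlitz, hα]; exact hβ)
    simpa only [map_sub, h, sub_left_inj] using htorsion _ hsub

theorem carlitz_galois_sub_self (hY : Y ⊆ Set.range (algebraMap k Ω)) (σ : Gal(E/k)) {α : E}
    (hα : carlitz Fq Ω M α ∈ Y) : carlitz Fq E M (σ α - α) = 0 := by
  obtain ⟨b, hb⟩ := hY hα
  have : carlitz Fq E M α = algebraMap k E b := Subtype.ext ((coe_carlitz E M α).trans hb.symm)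
  rw [map_sub, ← galois_carlitz, this, AlgEquiv.commutes, sub_self]

theorem exists_galois_apply_eq_carlitz [IsFractionRing Fq[X] k] [Normal k Ω] [IsAlgClosed Ω]
    [Normal k E] {B : Fq[X]} (hM : M ≠ 0) (hB : IsCoprime B M) :
    ∃ s : Gal(E/k), ∀ x : E, carlitz Fq E M x = 0 → s x = carlitz Fq E B x := by
  obtain ⟨σ, hσ⟩ := mem_torsionMultipliers_of_isCoprime (k := k) (Ω := Ω) hM hB
  refine ⟨σ.restrictNormal E, fun x hx => Subtype.ext ?_⟩
  calc ((σ.restrictNormal E x : E) : Ω) = σ x := σ.restrictNormal_commutes E x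
    _ = carlitz Fq Ω B x := hσ x (by rw [← coe_carlitz, hx]; rfl)
    _ = (carlitz Fq E B x : E) := (coe_carlitz E B x).symm

end KummerExtension

section DecompConjModule

variable {Fq : Type} [Field Fq] [Fintype Fq]

theorem IsCarlitz.eq_carlitz
    {ψ : Fq[X] →+* AddMonoid.End (AlgebraicClosure (RatFunc Fq))} (hψ : IsCarlitz ψ) :
    ψ = carlitz Fq (AlgebraicClosure (RatFunc Fq)) := by
  refine Polynomial.ringHom_ext
    (fun c => AddMonoidHom.ext fun α => (hψ.2 c α).trans (.trans ?_ (carlitz_C c α).symm))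
    (AddMonoidHom.ext fun α => (hψ.1 α).trans (.trans ?_ (carlitz_X α).symm))
  · rw [IsScalarTower.algebraMap_apply Fq[X] (RatFunc Fq), RatFunc.algebraMap_C]
  · rw [IsScalarTower.algebraMap_apply Fq[X] (RatFunc Fq), RatFunc.algebraMap_X]

variable {M : Fq[X]} {E : IntermediateField (RatFunc Fq) (AlgebraicClosure (RatFunc Fq))}

theorem fixesTorsion_carlitz_iff {τ : Gal(E/RatFunc Fq)} :
    FixesTorsion (carlitz Fq _) M τ ↔
      τ ∈ fixingSubgroup Gal(E/RatFunc Fq) {x : E | carlitz Fq E M x = 0} := by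
  simp only [FixesTorsion, mem_fixingSubgroup_iff, Set.mem_ofPred_eq, ← coe_carlitz,
    ZeroMemClass.coe_eq_zero, AlgEquiv.smul_def]

theorem extendsSigma_carlitz_iff {s : Gal(E/RatFunc Fq)} {B : Fq[X]} :
    ExtendsSigma (carlitz Fq _) M s B ↔
      ∀ x : E, carlitz Fq E M x = 0 → s x = carlitz Fq E B x := by
  simp only [ExtendsSigma, ← coe_carlitz, ZeroMemClass.coe_eq_zero, Subtype.coe_inj]

/-- The `A`-action `c` on `Gal(E/k)` given by decompositions into units modulo `M` is well-defined
on `Gal(E/K)` and makes it an `A`-module annihilated by `M`. -/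
def IsDecompConjModule (ψ : Fq[X] →+* AddMonoid.End (AlgebraicClosure (RatFunc Fq))) (M : Fq[X])
    (c : Fq[X] → Gal(E/RatFunc Fq) → Gal(E/RatFunc Fq)) : Prop :=
  IsDecompConjAction ψ M c ∧
  (∀ c', IsDecompConjAction ψ M c' → ∀ f τ, FixesTorsion ψ M τ → c' f τ = c f τ) ∧
  (∀ f τ, FixesTorsion ψ M τ → FixesTorsion ψ M (c f τ)) ∧
  (∀ f τ τ', FixesTorsion ψ M τ → FixesTorsion ψ M τ' → c f (τ * τ') = c f τ * c f τ') ∧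
  (∀ f g τ, FixesTorsion ψ M τ → c (f + g) τ = c f τ * c g τ) ∧
  (∀ f g τ, FixesTorsion ψ M τ → c (f * g) τ = c f (c g τ)) ∧
  (∀ τ, FixesTorsion ψ M τ → c 1 τ = τ) ∧
  (∀ τ, FixesTorsion ψ M τ → c M τ = 1)

/-- The map `θ : τ ↦ τ α - α` is an `A`-linear embedding of `Gal(E/K)`, with the `A`-action `c`,
into the `M`-torsion points. -/
def IsKummerEmbedding (ψ : Fq[X] →+* AddMonoid.End (AlgebraicClosure (RatFunc Fq))) (M : Fq[X])
    (c : Fq[X] → Gal(E/RatFunc Fq) → Gal(E/RatFunc Fq)) (α : E) : Prop :=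
  (∀ τ, FixesTorsion ψ M τ →
    ψ M ((τ α : AlgebraicClosure (RatFunc Fq)) - (α : AlgebraicClosure (RatFunc Fq))) = 0) ∧
  (∀ τ τ', FixesTorsion ψ M τ → FixesTorsion ψ M τ' →
    (τ α : AlgebraicClosure (RatFunc Fq)) = (τ' α : AlgebraicClosure (RatFunc Fq)) → τ = τ') ∧
  (∀ τ τ', FixesTorsion ψ M τ → FixesTorsion ψ M τ' →
    ((τ * τ') α : AlgebraicClosure (RatFunc Fq)) - (α : AlgebraicClosure (RatFunc Fq)) =
      ((τ α : AlgebraicClosure (RatFunc Fq)) - (α : AlgebraicClosure (RatFunc Fq))) +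
        ((τ' α : AlgebraicClosure (RatFunc Fq)) - (α : AlgebraicClosure (RatFunc Fq)))) ∧
  (∀ f τ, FixesTorsion ψ M τ →
    (c f τ α : AlgebraicClosure (RatFunc Fq)) - (α : AlgebraicClosure (RatFunc Fq)) =
      ψ f ((τ α : AlgebraicClosure (RatFunc Fq)) - (α : AlgebraicClosure (RatFunc Fq))))

variable {Y : Set (AlgebraicClosure (RatFunc Fq))}
variable {c : Fq[X] → Gal(E/RatFunc Fq) → Gal(E/RatFunc Fq)}

open IsKummerMultiple

theorem exists_sum_and_extendsSigma (hM : M ≠ 0)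
    (hq : ¬ (Fintype.card Fq = 2 ∧ X * (X + 1) ∣ M)) [Normal (RatFunc Fq) E] (f : Fq[X]) :
    ∃ (n : ℕ) (g : Fin n → Fq[X]) (s : Fin n → Gal(E/RatFunc Fq)), (∀ i, IsCoprime (g i) M) ∧
      M ∣ f - ∑ i, g i ∧ ∀ i, ExtendsSigma (carlitz Fq _) M (s i) (g i) := by
  obtain ⟨n, g, hg, rfl⟩ := exists_eq_sum_isCoprime hM hq f
  choose s hs using fun i => exists_galois_apply_eq_carlitz (E := E) hM (hg i)
  exact ⟨n, g, s, hg, by rw [sub_self]; exact dvd_zero M,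
    fun i => extendsSigma_carlitz_iff.mpr (hs i)⟩

theorem isDecompConjModule_of_isKummerMultiple {D : Set E}
    (hMD : {x : E | carlitz Fq E M x = 0} ⊆ D)
    (hD : ∀ s : Gal(E/RatFunc Fq), ∀ α ∈ D, carlitz Fq E M (s • α - α) = 0)
    (hext : ∀ s s' : Gal(E/RatFunc Fq), (∀ α ∈ D, s • α = s' • α) → s = s')
    (hdecomp : ∀ f : Fq[X], ∃ (n : ℕ) (g : Fin n → Fq[X]) (s : Fin n → Gal(E/RatFunc Fq)),
      (∀ i, IsCoprime (g i) M) ∧ M ∣ f - ∑ i, g i ∧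
        ∀ i, ExtendsSigma (carlitz Fq _) M (s i) (g i))
    (hc : ∀ f τ, FixesTorsion (carlitz Fq _) M τ →
      IsKummerMultiple (carlitz Fq E) D f τ (c f τ)) :
    IsDecompConjModule (carlitz Fq _) M c := by
  have hfix (f τ) (hτ : FixesTorsion (carlitz Fq _) M τ) : FixesTorsion (carlitz Fq _) M (c f τ) :=
    fixesTorsion_carlitz_iff.mpr
      ((hc f τ hτ).mem_fixingSubgroup hMD (fixesTorsion_carlitz_iff.mp hτ))
  have hdecompConj : IsDecompConjAction (carlitz Fq _) M c := fun f τ hτ n g _ hfg s hs =>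
    (hc f τ hτ).unique hext (prod_ofFn_conj hD hMD (fixesTorsion_carlitz_iff.mp hτ) hfg
      fun i => extendsSigma_carlitz_iff.mp (hs i))
  simp only [IsDecompConjModule, fixesTorsion_carlitz_iff] at hc hfix ⊢
  refine ⟨hdecompConj, fun c' hc' f τ hτ => ?_, hfix, fun f τ τ' hτ hτ' => ?_, fun f g τ hτ => ?_,
    fun f g τ hτ => ?_, fun τ hτ => ?_, fun τ hτ => ?_⟩
  · obtain ⟨n, g, s, hg, hfg, hs⟩ := hdecomp f
    have hτ := fixesTorsion_carlitz_iff.mpr hτ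
    rw [hc' f τ hτ n g hg hfg s hs, hdecompConj f τ hτ n g hg hfg s hs]
  · exact (hc f _ (mul_mem hτ hτ')).unique hext
      (mul_right hD hτ (hfix f τ hτ) (hc f τ hτ) (hc f τ' hτ'))
  · exact (hc _ τ hτ).unique hext (add_left hD (hfix f τ hτ) (hc f τ hτ) (hc g τ hτ))
  · exact (hc _ τ hτ).unique hext ((hc g τ hτ).comp (hc f _ (hfix g τ hτ)))
  · exact (hc 1 τ hτ).unique hext (one_left τ)
  · exact (hc M τ hτ).unique hext (exponent hD τ)

theorem exists_isDecompConjModule (hM : M ≠ 0)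
    (hq : ¬ (Fintype.card Fq = 2 ∧ X * (X + 1) ∣ M))
    (hY0 : 0 ∈ Y) (hY : Y ⊆ Set.range (algebraMap (RatFunc Fq) _))
    (hE : E = adjoin (RatFunc Fq) {x | carlitz Fq _ M x ∈ Y}) :
    ∃ c : Fq[X] → Gal(E/RatFunc Fq) → Gal(E/RatFunc Fq),
      IsDecompConjModule (carlitz Fq _) M c ∧ ∀ f τ, FixesTorsion (carlitz Fq _) M τ →
        IsKummerMultiple (carlitz Fq E) {α : E | carlitz Fq _ M (α : AlgebraicClosure _) ∈ Y}
          f τ (c f τ) := by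
  set D := {α : E | carlitz Fq _ M (α : AlgebraicClosure (RatFunc Fq)) ∈ Y}
  have hMD : {x : E | carlitz Fq E M x = 0} ⊆ D := fun x hx => by
    change carlitz Fq _ M (x : AlgebraicClosure (RatFunc Fq)) ∈ Y
    rwa [← coe_carlitz, hx]
  have hD (s : Gal(E/RatFunc Fq)) (α : E) (hα : α ∈ D) : carlitz Fq E M (s • α - α) = 0 :=
    carlitz_galois_sub_self hY s hα
  have : Normal (RatFunc Fq) E := normal_of_eq_adjoin_carlitz hY hE
  have hdecomp := exists_sum_and_extendsSigma (E := E) hM hq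
  have hex (f : Fq[X]) (τ : Gal(E/RatFunc Fq)) : ∃ ρ, FixesTorsion (carlitz Fq _) M τ →
      IsKummerMultiple (carlitz Fq E) D f τ ρ := by
    obtain ⟨n, g, s, -, hfg, hs⟩ := hdecomp f
    exact ⟨_, fun hτ => prod_ofFn_conj hD hMD (fixesTorsion_carlitz_iff.mp hτ) hfg
      fun i => extendsSigma_carlitz_iff.mp (hs i)⟩
  choose c hc using hex
  exact ⟨c, isDecompConjModule_of_isKummerMultiple hMD hD
    (fun s s' h => galois_ext_of_eq_adjoin_carlitz hE h) hdecomp hc, hc⟩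

theorem isKummerEmbedding_of_isKummerMultiple {z : AlgebraicClosure (RatFunc Fq)}
    (hz : z ∈ Set.range (algebraMap (RatFunc Fq) _))
    (hE : E = adjoin (RatFunc Fq) {x | carlitz Fq _ M x ∈ ({0, z} : Set _)})
    (hc : ∀ f τ, FixesTorsion (carlitz Fq _) M τ →
      IsKummerMultiple (carlitz Fq E) {β : E | carlitz Fq _ M (β : AlgebraicClosure _) = z}
        f τ (c f τ))
    {α : E} (hα : carlitz Fq _ M (α : AlgebraicClosure (RatFunc Fq)) = z) :
    IsKummerEmbedding (carlitz Fq _) M c α := by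
  have hD (s : Gal(E/RatFunc Fq)) (β : E)
      (hβ : carlitz Fq _ M (β : AlgebraicClosure (RatFunc Fq)) = z) :
      carlitz Fq E M (s • β - β) = 0 :=
    carlitz_galois_sub_self (Set.singleton_subset_iff.mpr hz) s hβ
  refine ⟨fun τ _ => ?_, fun τ τ' hτ hτ' h => ?_, fun τ τ' hτ _ => ?_, fun f τ hτ => ?_⟩
  · exact (coe_carlitz E M (τ α - α)).symm.trans (congrArg _ (hD τ α hα))
  · rw [fixesTorsion_carlitz_iff, mem_fixingSubgroup_iff] at hτ hτ'
    exact galois_eq_of_apply_eq_of_eq_adjoin hE hα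
      (fun x hx => (hτ x hx).trans (hτ' x hx).symm) (Subtype.ext h)
  · exact congrArg Subtype.val
      (mul_smul_sub_of_mem_fixingSubgroup hD (fixesTorsion_carlitz_iff.mp hτ) hα)
  · exact (congrArg Subtype.val (hc f τ hτ α hα)).trans (coe_carlitz E f (τ α - α))

theorem carlitz_module_structure_on_kummer_galois_group_general
    (ψ : Fq[X] →+* AddMonoid.End (AlgebraicClosure (RatFunc Fq))) (hψ : IsCarlitz ψ) (hM : M ≠ 0)
    (hq : ¬ (Fintype.card Fq = 2 ∧ X * (X + 1) ∣ M)) (z : RatFunc Fq)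
    (Ez : IntermediateField (RatFunc Fq) (AlgebraicClosure (RatFunc Fq)))
    (hEz : Ez = adjoin (RatFunc Fq) ({x | ψ M x = 0} ∪ {x | ψ M x = algebraMap _ _ z}))
    (Γ : Set (AlgebraicClosure (RatFunc Fq))) (hΓ0 : 0 ∈ Γ)
    (hΓ : Γ ⊆ Set.range (algebraMap (RatFunc Fq) _))
    (EΓ : IntermediateField (RatFunc Fq) (AlgebraicClosure (RatFunc Fq)))
    (hEΓ : EΓ = adjoin (RatFunc Fq) {x | ψ M x ∈ Γ}) :
    (∃ c : Fq[X] → Gal(EΓ/RatFunc Fq) → Gal(EΓ/RatFunc Fq), IsDecompConjModule ψ M c) ∧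
    ∃ c : Fq[X] → Gal(Ez/RatFunc Fq) → Gal(Ez/RatFunc Fq), IsDecompConjModule ψ M c ∧
      ∀ α : Ez, ψ M (α : AlgebraicClosure (RatFunc Fq)) = algebraMap _ _ z →
        IsKummerEmbedding ψ M c α := by
  obtain rfl := hψ.eq_carlitz
  have hz : {0, algebraMap _ _ z} ⊆
      Set.range (algebraMap (RatFunc Fq) (AlgebraicClosure (RatFunc Fq))) :=
    Set.pair_subset ⟨0, map_zero _⟩ ⟨z, rfl⟩
  obtain ⟨c, hc, -⟩ := exists_isDecompConjModule hM hq hΓ0 hΓ hEΓ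
  obtain ⟨c', hc', hmul⟩ := exists_isDecompConjModule hM hq (Set.mem_insert 0 _) hz hEz
  exact ⟨⟨c, hc⟩, c', hc', fun α hα => isKummerEmbedding_of_isKummerMultiple ⟨z, rfl⟩ hEz
    (fun f τ hτ β hβ => hmul f τ hτ β (.inr hβ)) hα⟩

end DecompConjModule

/-- **Proposition 2.3.**
Except for the case `q = 2` and `T(T+1) ∣ M`:
(1) the `A`-action defined by `f · ψ_λ = Σ_i σ_{f_i} · ψ_λ` (for decompositions
`f ≡ Σ_i f_i (mod M)` with `gcd(f_i, M) = 1`, via the conjugation action) is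
well-defined (exists and is independent of the decomposition) and gives an `A`-module
structure on `H_{M,z} = Gal(k_{M,z}/K)` and consequently on `H_{M,Γ} = Gal(k_{M,Γ}/K)`;
(2) the image `H_M` of `H_{M,z}` in `Λ_M` (under `ψ_λ ↦ λ = ψ_λ(α) - α`) is an
`A`-submodule of `Λ_M`, the embedding `H_{M,z} → H_M` is an `A`-module isomorphism, and
`H_{M,z}` and `H_{M,Γ}` are `A`-modules of exponent `M` (annihilated by `M`). -/
theorem carlitz_module_structure_on_kummer_galois_group
    {Fq : Type} [Field Fq] [Fintype Fq]
    (ψ : Polynomial Fq →+* AddMonoid.End (AlgebraicClosure (RatFunc Fq)))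
    (hψ : IsCarlitz ψ)
    (M : Polynomial Fq) (hM : 0 < M.natDegree)
    (hq : ¬ (Fintype.card Fq = 2 ∧ X * (X + 1) ∣ M))
    -- the element z ∈ k and the splitting field k_{M,z} of u^M - z over k
    (z : RatFunc Fq)
    (Ez : IntermediateField (RatFunc Fq) (AlgebraicClosure (RatFunc Fq)))
    (hEz : Ez = adjoin (RatFunc Fq)
        ({x | ψ M x = 0} ∪
         {x | ψ M x = algebraMap (RatFunc Fq) (AlgebraicClosure (RatFunc Fq)) z}))
    -- Γ : a finitely generated A-submodule of (k, +)
    (Γ : AddSubgroup (AlgebraicClosure (RatFunc Fq)))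
    (hΓk : ∀ x ∈ Γ, x ∈ Set.range (algebraMap (RatFunc Fq) (AlgebraicClosure (RatFunc Fq))))
    (hΓA : ∀ (f : Polynomial Fq), ∀ x ∈ Γ, ψ f x ∈ Γ)
    (hΓfg : ∃ (n : ℕ) (a : Fin n → AlgebraicClosure (RatFunc Fq)), (∀ i, a i ∈ Γ) ∧
      ∀ x ∈ Γ, ∃ g : Fin n → Polynomial Fq, x = ∑ i, ψ (g i) (a i))
    -- k_{M,Γ} = k(Λ_M, (1/M)Γ)
    (EΓ : IntermediateField (RatFunc Fq) (AlgebraicClosure (RatFunc Fq)))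
    (hEΓ : EΓ = adjoin (RatFunc Fq) {x | ψ M x ∈ Γ}) :
    -- (1) for H_{M,Γ} :
    (∃ c : Polynomial Fq → (↥EΓ ≃ₐ[RatFunc Fq] ↥EΓ) → (↥EΓ ≃ₐ[RatFunc Fq] ↥EΓ),
      IsDecompConjAction ψ M c ∧
      -- well-definedness: any map defined by the decomposition recipe agrees with c
      (∀ c', IsDecompConjAction ψ M c' →
        ∀ f τ, FixesTorsion ψ M τ → c' f τ = c f τ) ∧
      -- c preserves H_{M,Γ} and is an A-module structure on it
      (∀ f τ, FixesTorsion ψ M τ → FixesTorsion ψ M (c f τ)) ∧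
      (∀ f τ τ', FixesTorsion ψ M τ → FixesTorsion ψ M τ' →
        c f (τ * τ') = c f τ * c f τ') ∧
      (∀ f g τ, FixesTorsion ψ M τ → c (f + g) τ = c f τ * c g τ) ∧
      (∀ f g τ, FixesTorsion ψ M τ → c (f * g) τ = c f (c g τ)) ∧
      (∀ τ, FixesTorsion ψ M τ → c 1 τ = τ) ∧
      -- H_{M,Γ} has exponent M
      (∀ τ, FixesTorsion ψ M τ → c M τ = 1)) ∧
    -- (1),(2) for H_{M,z} :
    (∃ c : Polynomial Fq → (↥Ez ≃ₐ[RatFunc Fq] ↥Ez) → (↥Ez ≃ₐ[RatFunc Fq] ↥Ez),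
      IsDecompConjAction ψ M c ∧
      (∀ c', IsDecompConjAction ψ M c' →
        ∀ f τ, FixesTorsion ψ M τ → c' f τ = c f τ) ∧
      (∀ f τ, FixesTorsion ψ M τ → FixesTorsion ψ M (c f τ)) ∧
      (∀ f τ τ', FixesTorsion ψ M τ → FixesTorsion ψ M τ' →
        c f (τ * τ') = c f τ * c f τ') ∧
      (∀ f g τ, FixesTorsion ψ M τ → c (f + g) τ = c f τ * c g τ) ∧
      (∀ f g τ, FixesTorsion ψ M τ → c (f * g) τ = c f (c g τ)) ∧
      (∀ τ, FixesTorsion ψ M τ → c 1 τ = τ) ∧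
      (∀ τ, FixesTorsion ψ M τ → c M τ = 1) ∧
      -- (2): via the embedding θ : τ ↦ τ(α) - α into Λ_M (for any fixed root α of u^M - z)
      (∀ α : ↥Ez,
        ψ M (α : AlgebraicClosure (RatFunc Fq))
            = algebraMap (RatFunc Fq) (AlgebraicClosure (RatFunc Fq)) z →
        -- θ takes values in Λ_M
        (∀ τ, FixesTorsion ψ M τ →
          ψ M ((τ α : AlgebraicClosure (RatFunc Fq)) - (α : AlgebraicClosure (RatFunc Fq)))
            = 0) ∧
        -- θ is injective on H_{M,z}
        (∀ τ τ', FixesTorsion ψ M τ → FixesTorsion ψ M τ' →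
          (τ α : AlgebraicClosure (RatFunc Fq)) = (τ' α : AlgebraicClosure (RatFunc Fq)) →
          τ = τ') ∧
        -- θ is additive
        (∀ τ τ', FixesTorsion ψ M τ → FixesTorsion ψ M τ' →
          ((τ * τ') α : AlgebraicClosure (RatFunc Fq))
              - (α : AlgebraicClosure (RatFunc Fq))
            = ((τ α : AlgebraicClosure (RatFunc Fq))
                - (α : AlgebraicClosure (RatFunc Fq)))
              + ((τ' α : AlgebraicClosure (RatFunc Fq))
                - (α : AlgebraicClosure (RatFunc Fq)))) ∧
        -- θ is A-equivariant: θ(f · τ) = (θ τ)^f ; in particular the image H_M of θ is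
        -- an A-submodule of Λ_M and θ : H_{M,z} → H_M is an A-module isomorphism
        (∀ f τ, FixesTorsion ψ M τ →
          (c f τ α : AlgebraicClosure (RatFunc Fq)) - (α : AlgebraicClosure (RatFunc Fq))
            = ψ f ((τ α : AlgebraicClosure (RatFunc Fq))
                - (α : AlgebraicClosure (RatFunc Fq)))))) := by
  obtain ⟨hΓ, hz⟩ := carlitz_module_structure_on_kummer_galois_group_general ψ
    hψ (ne_zero_of_natDegree_gt hM) hq z Ez hEz
    (Γ : Set (AlgebraicClosure (RatFunc Fq))) Γ.zero_mem hΓk EΓ hEΓ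
  simp only [IsDecompConjModule, IsKummerEmbedding, and_assoc] at hΓ hz
  exact ⟨hΓ, hz⟩
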